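/- Suppose σ = 0, ν is a nonzero Lévy measure carried by (−∞, 0] with ∫ min(1, |x|) ν(dx) < ∞, and γ := ∫_{(−∞,0)} (1 − e^x) ν(dx) ≤ 1. Then [0, ∞) ⊆ I_ν, for every q ≥ 0 one has φ(q) = (γ − 1)q + 1 − ∫_{(−∞,0)} (1 − e^{qx}) ν(dx), the derivative φ′(1) is strictly negative, and φ(q) < 0 for every q > 1. -/

import Mathlib

open MeasureTheory

/-- `I_ν = {q : ∫_{|x|≥1} e^{qx} ν(dx) < ∞}`. -/
noncomputable def Inu (ν : Measure ℝ) : Set ℝ :=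
  {q : ℝ | ∫⁻ x in {x : ℝ | 1 ≤ |x|}, ENNReal.ofReal (Real.exp (q * x)) ∂ν < ⊤}

/-- The normalizing drift `a = −σ²/2 − ∫ (e^x − 1 − x 1_{|x|≤1}) ν(dx)`. -/
noncomputable def levyA (σ : ℝ) (ν : Measure ℝ) : ℝ :=
  -σ ^ 2 / 2 - ∫ x, (Real.exp x - 1 - if |x| ≤ 1 then x else 0) ∂ν

/-- `ψ̃(q) = a q + σ² q²/2 + ∫ (e^{qx} − 1 − q x 1_{|x|≤1}) ν(dx)`. -/
noncomputable def psiT (σ : ℝ) (ν : Measure ℝ) (q : ℝ) : ℝ :=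
  levyA σ ν * q + σ ^ 2 * q ^ 2 / 2 +
    ∫ x, (Real.exp (q * x) - 1 - q * (if |x| ≤ 1 then x else 0)) ∂ν

/-- `φ(q) = ψ̃(q) − (q − 1)`. -/
noncomputable def phiF (σ : ℝ) (ν : Measure ℝ) (q : ℝ) : ℝ := psiT σ ν q - (q - 1)

/-!
With `Φ q = ∫ (1 - e^{qx}) ν(dx)`, which is finite because the jumps are negative and have finite
variation, the truncation term cancels and `φ q = (γ - 1) q + 1 - Φ q` where `γ = Φ 1`.
Equivalently `φ q = (γ - 1) (q - 1) + (Φ 1 - Φ q)`, which is negative for `q > 1` because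
`γ ≤ 1` and `Φ` is strictly increasing. Differentiating under the integral sign gives
`φ' 1 = γ - 1 - ∫ |x| e^x ν(dx) < 0`.
-/

theorem ae_lt_of_measure_singleton_of_measure_Ioi {α : Type*} [LinearOrder α] [MeasurableSpace α]
    {μ : Measure α} {a : α} (ha : μ {a} = 0) (hIoi : μ (Set.Ioi a) = 0) : ∀ᵐ x ∂μ, x < a := by
  filter_upwards [measure_eq_zero_iff_ae_notMem.1 ha, measure_eq_zero_iff_ae_notMem.1 hIoi]
    with x hx_ne hx_le
  exact lt_of_le_of_ne (not_lt.1 hx_le) hx_ne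

theorem integral_pos_of_ae_pos {α : Type*} [MeasurableSpace α] {μ : Measure α} {f : α → ℝ}
    (hμ : μ ≠ 0) (hf : Integrable f μ) (hpos : ∀ᵐ x ∂μ, 0 < f x) : 0 < ∫ x, f x ∂μ := by
  rw [integral_pos_iff_support_of_nonneg_ae (hpos.mono fun _ hx => hx.le) hf]
  have h_support : Function.support f =ᵐ[μ] Set.univ :=
    Filter.eventuallyEq_univ.2 (hpos.mono fun _ hx => hx.ne')
  rwa [measure_congr h_support, Measure.measure_univ_pos]

theorem one_sub_exp_mul_le_mul_min {x : ℝ} (q : ℝ) (hx : x ≤ 0) :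
    1 - Real.exp (q * x) ≤ max 1 q * min 1 |x| := by
  have h_linear : 1 - Real.exp (q * x) ≤ q * |x| := by
    rw [abs_of_nonpos hx]
    linarith [Real.add_one_le_exp (q * x)]
  rw [mul_min_of_nonneg _ _ (by positivity), mul_one]
  refine le_min (le_max_of_le_left (by linarith [Real.exp_pos (q * x)])) (h_linear.trans ?_)
  gcongr
  exact le_max_right 1 q

theorem norm_neg_mul_exp_mul_le_mul_min {c q x : ℝ} (hc : 0 < c) (hcq : c ≤ q) (hx : x ≤ 0) :
    ‖-x * Real.exp (q * x)‖ ≤ max 1 c⁻¹ * min 1 |x| := by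
  have h_bounded : |x| * Real.exp (q * x) ≤ c⁻¹ := by
    have h_exp : c * |x| * Real.exp (-(c * |x|)) ≤ 1 :=
      (Real.mul_exp_neg_le_exp_neg_one _).trans (Real.exp_le_one_iff.2 (by norm_num))
    calc |x| * Real.exp (q * x) ≤ |x| * Real.exp (-(c * |x|)) := by
          gcongr
          rw [abs_of_nonpos hx, mul_neg, neg_neg]
          exact mul_le_mul_of_nonpos_right hcq hx
      _ ≤ c⁻¹ := by
          rw [← one_div, le_div_iff₀ hc]
          linarith
  have h_linear : |x| * Real.exp (q * x) ≤ |x| :=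
    mul_le_of_le_one_right (abs_nonneg x)
      (Real.exp_le_one_iff.2 (mul_nonpos_of_nonneg_of_nonpos (hc.le.trans hcq) hx))
  rw [norm_mul, norm_neg, Real.norm_eq_abs, Real.norm_of_nonneg (Real.exp_pos _).le,
    mul_min_of_nonneg _ _ (by positivity), mul_one]
  exact le_min (le_max_of_le_right h_bounded)
    (h_linear.trans (le_mul_of_one_le_left (abs_nonneg x) (le_max_left 1 _)))

/-- The Laplace exponent `q ↦ ∫ (1 - e^{qx}) ν(dx)` of the driftless subordinator whose jumps are
the sizes `|x|` of the jumps `x < 0` governed by `ν`. The number `γ` of the theorem is its value at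
`1`. For `q ≥ 0` the integral exists (rather than having the junk value `0`) if `ν` is carried by
`(-∞, 0]` and integrates `min 1 |x|`. -/
noncomputable def subordinatorExponent (ν : Measure ℝ) (q : ℝ) : ℝ :=
  ∫ x, (1 - Real.exp (q * x)) ∂ν

section

variable {ν : Measure ℝ} {q : ℝ}

theorem subordinatorExponent_eq_setIntegral_Iio (hnonpos : ∀ᵐ x ∂ν, x ≤ 0) (q : ℝ) :
    subordinatorExponent ν q = ∫ x in Set.Iio (0 : ℝ), (1 - Real.exp (q * x)) ∂ν := by
  refine (setIntegral_eq_integral_of_ae_compl_eq_zero ?_).symm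
  filter_upwards [hnonpos] with x hx hx'
  simp [le_antisymm hx (not_lt.1 hx')]

theorem integrable_ite_abs_le_one (hmin : Integrable (fun x => min 1 |x|) ν) :
    Integrable (fun x : ℝ => if |x| ≤ 1 then x else 0) ν := by
  have h_meas : Measurable fun x : ℝ => if |x| ≤ 1 then x else 0 :=
    Measurable.ite (measurableSet_le (by fun_prop) (by fun_prop)) (by fun_prop) (by fun_prop)
  refine hmin.mono' h_meas.aestronglyMeasurable (.of_forall fun x => ?_)
  split_ifs with hx
  · rw [Real.norm_eq_abs, min_eq_right hx]
  · simp

theorem integrable_one_sub_exp_mul (hmin : Integrable (fun x => min 1 |x|) ν)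
    (hnonpos : ∀ᵐ x ∂ν, x ≤ 0) (hq : 0 ≤ q) : Integrable (fun x => 1 - Real.exp (q * x)) ν := by
  refine (hmin.const_mul (max 1 q)).mono' (by fun_prop) ?_
  filter_upwards [hnonpos] with x hx
  have h_exp : Real.exp (q * x) ≤ 1 :=
    Real.exp_le_one_iff.2 (mul_nonpos_of_nonneg_of_nonpos hq hx)
  rw [Real.norm_of_nonneg (sub_nonneg.2 h_exp)]
  exact one_sub_exp_mul_le_mul_min q hx

theorem integrable_neg_mul_exp_mul (hmin : Integrable (fun x => min 1 |x|) ν)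
    (hnonpos : ∀ᵐ x ∂ν, x ≤ 0) (hq : 0 < q) : Integrable (fun x => -x * Real.exp (q * x)) ν :=
  (hmin.const_mul (max 1 q⁻¹)).mono' (by fun_prop) <|
    hnonpos.mono fun _ hx => norm_neg_mul_exp_mul_le_mul_min hq le_rfl hx

theorem hasDerivAt_subordinatorExponent (hmin : Integrable (fun x => min 1 |x|) ν)
    (hnonpos : ∀ᵐ x ∂ν, x ≤ 0) (hq : 0 < q) :
    HasDerivAt (subordinatorExponent ν) (∫ x, -x * Real.exp (q * x) ∂ν) q := by
  refine (hasDerivAt_integral_of_dominated_loc_of_deriv_le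
    (F' := fun p x => -x * Real.exp (p * x)) (bound := fun x => max 1 (q / 2)⁻¹ * min 1 |x|)
    (Ici_mem_nhds (half_lt_self hq)) (.of_forall fun p => by fun_prop)
    (integrable_one_sub_exp_mul hmin hnonpos hq.le) (by fun_prop) ?_ (hmin.const_mul _) ?_).2
  · filter_upwards [hnonpos] with x hx p hp
    exact norm_neg_mul_exp_mul_le_mul_min (half_pos hq) hp hx
  · refine .of_forall fun x p _ => ?_
    simpa [mul_comm] using ((hasDerivAt_mul_const x).exp.const_sub 1 : HasDerivAt _ _ p)

theorem integral_neg_mul_exp_mul_pos (hmin : Integrable (fun x => min 1 |x|) ν)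
    (hν : ν ≠ 0) (hneg : ∀ᵐ x ∂ν, x < 0) (hq : 0 < q) :
    0 < ∫ x, -x * Real.exp (q * x) ∂ν :=
  integral_pos_of_ae_pos hν
    (integrable_neg_mul_exp_mul hmin (hneg.mono fun _ hx => hx.le) hq) <|
    hneg.mono fun _ hx => mul_pos (neg_pos.2 hx) (Real.exp_pos _)

theorem strictMonoOn_subordinatorExponent (hmin : Integrable (fun x => min 1 |x|) ν)
    (hν : ν ≠ 0) (hneg : ∀ᵐ x ∂ν, x < 0) :
    StrictMonoOn (subordinatorExponent ν) (Set.Ici 0) := by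
  intro p hp q hq hpq
  have h_integrable {r : ℝ} (hr : 0 ≤ r) : Integrable (fun x => 1 - Real.exp (r * x)) ν :=
    integrable_one_sub_exp_mul hmin (hneg.mono fun _ hx => hx.le) hr
  rw [← sub_pos, subordinatorExponent, subordinatorExponent,
    ← integral_sub (h_integrable hq) (h_integrable hp)]
  refine integral_pos_of_ae_pos hν ((h_integrable hq).sub (h_integrable hp)) ?_
  filter_upwards [hneg] with x hx
  have h_exp : Real.exp (q * x) < Real.exp (p * x) :=
    Real.exp_lt_exp.2 (mul_lt_mul_of_neg_right hpq hx)
  linarith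

theorem Ici_zero_subset_Inu (hmin : Integrable (fun x => min 1 |x|) ν)
    (hnonpos : ∀ᵐ x ∂ν, x ≤ 0) : Set.Ici 0 ⊆ Inu ν := by
  intro q hq
  have h_finite : ν {x | 1 ≤ |x|} < ⊤ := by
    refine (measure_mono fun x (hx : 1 ≤ |x|) => ?_).trans_lt
      (hmin.measure_norm_ge_lt_top one_pos)
    simp [min_eq_left hx]
  calc ∫⁻ x in {x | 1 ≤ |x|}, ENNReal.ofReal (Real.exp (q * x)) ∂ν
      ≤ ∫⁻ _ in {x | 1 ≤ |x|}, 1 ∂ν := by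
        refine lintegral_mono_ae (ae_restrict_of_ae ?_)
        filter_upwards [hnonpos] with x hx
        exact ENNReal.ofReal_le_one.2
          (Real.exp_le_one_iff.2 (mul_nonpos_of_nonneg_of_nonpos hq hx))
    _ = ν {x | 1 ≤ |x|} := setLIntegral_one _
    _ < ⊤ := h_finite

theorem integral_exp_mul_sub_one_sub_truncation (hmin : Integrable (fun x => min 1 |x|) ν)
    (hnonpos : ∀ᵐ x ∂ν, x ≤ 0) (hq : 0 ≤ q) :
    ∫ x, (Real.exp (q * x) - 1 - q * (if |x| ≤ 1 then x else 0)) ∂ν =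
      -subordinatorExponent ν q - q * ∫ x, (if |x| ≤ 1 then x else 0) ∂ν := by
  rw [subordinatorExponent, ← integral_neg, ← integral_const_mul,
    ← integral_sub (integrable_one_sub_exp_mul hmin hnonpos hq).fun_neg
      ((integrable_ite_abs_le_one hmin).const_mul q)]
  simp only [neg_sub]

theorem phiF_eq_subordinatorExponent (σ : ℝ) (hmin : Integrable (fun x => min 1 |x|) ν)
    (hnonpos : ∀ᵐ x ∂ν, x ≤ 0) (hq : 0 ≤ q) :
    phiF σ ν q = σ ^ 2 / 2 * (q ^ 2 - q) + (subordinatorExponent ν 1 - 1) * q + 1 -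
      subordinatorExponent ν q := by
  have h_one := integral_exp_mul_sub_one_sub_truncation hmin hnonpos zero_le_one
  simp only [one_mul] at h_one
  rw [phiF, psiT, levyA, h_one, integral_exp_mul_sub_one_sub_truncation hmin hnonpos hq]
  ring

theorem hasDerivAt_phiF (σ : ℝ) (hmin : Integrable (fun x => min 1 |x|) ν)
    (hnonpos : ∀ᵐ x ∂ν, x ≤ 0) (hq : 0 < q) :
    HasDerivAt (phiF σ ν) (σ ^ 2 / 2 * (2 * q - 1) + (subordinatorExponent ν 1 - 1) -
      ∫ x, -x * Real.exp (q * x) ∂ν) q := by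
  have h_quadratic : HasDerivAt
      (fun p => σ ^ 2 / 2 * (p ^ 2 - p) + (subordinatorExponent ν 1 - 1) * p + 1)
      (σ ^ 2 / 2 * (2 * q - 1) + (subordinatorExponent ν 1 - 1)) q := by
    simpa using ((((hasDerivAt_pow 2 q).sub (hasDerivAt_id q)).const_mul (σ ^ 2 / 2)).add
      ((hasDerivAt_id q).const_mul (subordinatorExponent ν 1 - 1))).add_const 1
  refine (h_quadratic.sub
    (hasDerivAt_subordinatorExponent hmin hnonpos hq)).congr_of_eventuallyEq ?_
  filter_upwards [Ioi_mem_nhds hq] with p hp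
  exact phiF_eq_subordinatorExponent σ hmin hnonpos (le_of_lt hp)

end

/-- Suppose `σ = 0`, `ν` is a nonzero Lévy measure carried by `(−∞,0]` with
`∫ min(1,|x|) ν(dx) < ∞`, and `γ = ∫_{(−∞,0)} (1 − e^x) ν(dx) ≤ 1`. Then `[0,∞) ⊆ I_ν`,
for every `q ≥ 0` one has `φ(q) = (γ−1)q + 1 − ∫_{(−∞,0)} (1 − e^{qx}) ν(dx)`, the
derivative `φ′(1)` is strictly negative, and `φ(q) < 0` for every `q > 1`. -/
theorem stmt_7 (σ : ℝ) (ν : Measure ℝ)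
    (hν0 : ν {0} = 0)
    (hν2 : ∫⁻ x, ENNReal.ofReal (min 1 (x ^ 2)) ∂ν < ⊤)
    (hσ : σ = 0) (hνne : ν ≠ 0)
    (hcar : ν (Set.Ioi 0) = 0)
    (hIν : Set.Icc (0 : ℝ) 1 ⊆ Inu ν)
    (hmin : ∫⁻ x, ENNReal.ofReal (min 1 |x|) ∂ν < ⊤)
    (hγ : (∫ x in Set.Iio (0 : ℝ), (1 - Real.exp x) ∂ν) ≤ 1) :
    Set.Ici (0 : ℝ) ⊆ Inu ν ∧
    (∀ q : ℝ, 0 ≤ q → phiF σ ν q =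
      ((∫ x in Set.Iio (0 : ℝ), (1 - Real.exp x) ∂ν) - 1) * q + 1 -
        ∫ x in Set.Iio (0 : ℝ), (1 - Real.exp (q * x)) ∂ν) ∧
    (∃ L : ℝ, L < 0 ∧ HasDerivAt (phiF σ ν) L 1) ∧
    (∀ q : ℝ, 1 < q → phiF σ ν q < 0) := by
  subst hσ
  have hneg : ∀ᵐ x ∂ν, x < 0 := ae_lt_of_measure_singleton_of_measure_Ioi hν0 hcar
  have hnonpos : ∀ᵐ x ∂ν, x ≤ 0 := hneg.mono fun _ hx => hx.le
  have hmin_int : Integrable (fun x => min 1 |x|) ν :=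
    (lintegral_ofReal_ne_top_iff_integrable (by fun_prop)
      (.of_forall fun x => le_min zero_le_one (abs_nonneg x))).1 hmin.ne
  have hγ_eq : ∫ x in Set.Iio (0 : ℝ), (1 - Real.exp x) ∂ν = subordinatorExponent ν 1 := by
    simp only [subordinatorExponent_eq_setIntegral_Iio hnonpos, one_mul]
  rw [hγ_eq] at hγ ⊢
  refine ⟨Ici_zero_subset_Inu hmin_int hnonpos, fun q hq => ?_,
    ⟨_, ?_, hasDerivAt_phiF 0 hmin_int hnonpos one_pos⟩, fun q hq => ?_⟩
  · rw [phiF_eq_subordinatorExponent 0 hmin_int hnonpos hq,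
      subordinatorExponent_eq_setIntegral_Iio hnonpos q]
    ring
  · linarith [integral_neg_mul_exp_mul_pos hmin_int hνne hneg one_pos]
  · rw [phiF_eq_subordinatorExponent 0 hmin_int hnonpos (zero_le_one.trans hq.le)]
    have hlt := strictMonoOn_subordinatorExponent hmin_int hνne hneg
      (Set.mem_Ici.2 zero_le_one) (Set.mem_Ici.2 (zero_le_one.trans hq.le)) hq
    have h_linear : (subordinatorExponent ν 1 - 1) * (q - 1) ≤ 0 :=
      mul_nonpos_of_nonpos_of_nonneg (sub_nonpos.2 hγ) (sub_nonneg.2 hq.le)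
    linarith
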